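/- arXiv:1901.08410 — 4 statements merged into one kernel-verified Lean document; each statement's English description precedes it below -/
import Mathlib

section
/- Let 𝒳 be a finite set with more than one element, μ a probability measure on 𝒳 with μ(x) > 0 for all x, and P a Markov transition matrix on 𝒳 for which μ is reversible. Let Λ denote the spectral gap of P relative to μ and Φ(f) the L∞–L² Lipschitz constant of f : 𝒳 → ℝ. Then for every λ ≥ 0 with λ < 2√Λ / Φ(f), one has ln( E_μ[e^{λ f}] ) ≤ λ E_μ[f] + Θ( λ Φ(f) / (2√Λ) ), where Θ(t) = Σ_{n=0}^∞ 2^n ln(1/(1 − t·4^{−n})) for t ∈ [0,1). -/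
/-!
Write `M(s) = E_μ[exp (s f)]`, `Λ` for the spectral gap and `Φ` for the Lipschitz constant.
The Poincaré inequality `Λ Var_μ(g) ≤ ℰ(g, g)` (`poincare`), applied to `g = exp (s f / 2)`,
combined with `ℰ(g, g) ≤ (s Φ / 2)² M(s)` (`dirForm_exp_le`), gives the recursion
`M(s) (1 - (s Φ)² / (4 Λ)) ≤ M(s / 2)²` (`mgf_halving`). The energy bound comes from
the elementary inequality `(e^a - e^b)² ≤ (a - b)² (e^{2a} + e^{2b})` and reversibility.

With `t = λ Φ / (2 √Λ) < 1`, taking logarithms and iterating along `s = λ / 2^k` yields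
`log M(λ) ≤ ∑_{k < n} 2^k log (1 / (1 - t² / 4^k)) + 2^n log M(λ / 2^n)`. Since `t² ≤ t`, each
partial sum is at most `Θ(t)`, and `2^n log M(λ / 2^n) ≤ 2^n (M(λ / 2^n) - 1) → λ E_μ[f]` because
`M` has derivative `E_μ[f]` at `0`.
-/

/-- Expectation of `f` under the measure `μ` on a finite set. -/
noncomputable def eVal {X : Type*} [Fintype X] (μ f : X → ℝ) : ℝ := ∑ x, μ x * f x

/-- Variance of `f` under `μ`. -/
noncomputable def varVal {X : Type*} [Fintype X] (μ f : X → ℝ) : ℝ :=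
  ∑ x, μ x * (f x - eVal μ f) ^ 2

/-- Dirichlet form of `P` relative to `μ`. -/
noncomputable def dirForm {X : Type*} [Fintype X] (μ : X → ℝ) (P : X → X → ℝ)
    (f g : X → ℝ) : ℝ :=
  (1 / 2) * ∑ x, ∑ y, (f x - f y) * (g x - g y) * (μ x * P x y)

/-- Spectral gap of `P` relative to `μ`: the infimum (= minimum) of the Dirichlet form
over functions of variance at least `1`. -/
noncomputable def specGap {X : Type*} [Fintype X] (μ : X → ℝ) (P : X → X → ℝ) : ℝ :=
  sInf {E : ℝ | ∃ f : X → ℝ, 1 ≤ varVal μ f ∧ E = dirForm μ P f f}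

/-- The `L^∞`-`L^2` Lipschitz constant of `f` with respect to one step of the chain `P`. -/
noncomputable def lipC {X : Type*} [Fintype X] [Nonempty X] (P : X → X → ℝ) (f : X → ℝ) : ℝ :=
  ⨆ x, Real.sqrt (∑ y, P x y * |f x - f y| ^ 2)

/-- `Θ(t) = ∑_{n=0}^∞ 2^n ln(1/(1 - t·4^{-n}))`. -/
noncomputable def ThetaF (t : ℝ) : ℝ :=
  ∑' n : ℕ, (2 : ℝ) ^ n * Real.log (1 / (1 - t / 4 ^ n))

theorem dirForm_self_nonneg {X : Type*} [Fintype X] (μ : X → ℝ) (hμpos : ∀ x, 0 < μ x)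
    (P : X → X → ℝ) (hP0 : ∀ x y, 0 ≤ P x y) (g : X → ℝ) : 0 ≤ dirForm μ P g g := by
  unfold dirForm
  refine mul_nonneg (by norm_num) (Finset.sum_nonneg fun x _ => Finset.sum_nonneg fun y _ => ?_)
  exact mul_nonneg (mul_self_nonneg _) (mul_nonneg (hμpos x).le (hP0 x y))

/-- Poincaré inequality: the definition of the spectral gap, made homogeneous by scaling. -/
theorem poincare {X : Type*} [Fintype X] (μ : X → ℝ) (hμpos : ∀ x, 0 < μ x)
    (P : X → X → ℝ) (hP0 : ∀ x y, 0 ≤ P x y) (g : X → ℝ) :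
    specGap μ P * varVal μ g ≤ dirForm μ P g g := by
  have hv : 0 ≤ varVal μ g :=
    Finset.sum_nonneg fun x _ => mul_nonneg (hμpos x).le (sq_nonneg _)
  rcases hv.eq_or_lt with h0 | hpos
  · rw [← h0, mul_zero]
    exact dirForm_self_nonneg μ hμpos P hP0 g
  -- Normalise `g` to have variance exactly `1`.
  set c : ℝ := (Real.sqrt (varVal μ g))⁻¹ with hc
  have hc2 : c ^ 2 * varVal μ g = 1 := by
    rw [hc, inv_pow, Real.sq_sqrt hv, inv_mul_cancel₀ hpos.ne']
  have hvar : varVal μ (fun x => c * g x) = c ^ 2 * varVal μ g := by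
    have he : eVal μ (fun x => c * g x) = c * eVal μ g := by
      unfold eVal
      rw [Finset.mul_sum]
      exact Finset.sum_congr rfl fun x _ => by ring
    unfold varVal
    rw [he, Finset.mul_sum]
    exact Finset.sum_congr rfl fun x _ => by ring
  have hdir : dirForm μ P (fun x => c * g x) (fun x => c * g x) = c ^ 2 * dirForm μ P g g := by
    unfold dirForm
    simp only [Finset.mul_sum]
    exact Finset.sum_congr rfl fun x _ => Finset.sum_congr rfl fun y _ => by ring
  have hle : specGap μ P ≤ c ^ 2 * dirForm μ P g g := by
    rw [← hdir]
    refine csInf_le ⟨0, ?_⟩ ⟨_, by rw [hvar, hc2], rfl⟩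
    rintro E ⟨h, -, rfl⟩
    exact dirForm_self_nonneg μ hμpos P hP0 h
  calc specGap μ P * varVal μ g ≤ (c ^ 2 * dirForm μ P g g) * varVal μ g :=
        mul_le_mul_of_nonneg_right hle hv
    _ = (c ^ 2 * varVal μ g) * dirForm μ P g g := by ring
    _ = dirForm μ P g g := by rw [hc2, one_mul]

theorem exp_sub_sq_le (a b : ℝ) :
    (Real.exp a - Real.exp b) ^ 2 ≤ (a - b) ^ 2 * (Real.exp (2 * a) + Real.exp (2 * b)) := by
  wlog h : b ≤ a generalizing a b
  · have := this b a (le_of_not_ge h)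
    nlinarith [this]
  have h1 : Real.exp a - Real.exp b ≤ (a - b) * Real.exp a := by
    have h2 : Real.exp b = Real.exp a * Real.exp (b - a) := by rw [← Real.exp_add]; ring_nf
    have h3 := Real.add_one_le_exp (b - a)
    rw [h2]
    nlinarith [Real.exp_pos a]
  have h0 : 0 ≤ Real.exp a - Real.exp b := sub_nonneg.2 (Real.exp_le_exp.2 h)
  have e : Real.exp (2 * a) = Real.exp a ^ 2 := by rw [← Real.exp_nat_mul]; norm_num
  calc (Real.exp a - Real.exp b) ^ 2 ≤ ((a - b) * Real.exp a) ^ 2 := pow_le_pow_left₀ h0 h1 2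
    _ = (a - b) ^ 2 * Real.exp (2 * a) := by rw [e]; ring
    _ ≤ _ := by
      gcongr
      linarith [Real.exp_pos (2 * b)]

theorem sum_sq_le_lipC_sq {X : Type*} [Fintype X] [Nonempty X] (P : X → X → ℝ)
    (hP0 : ∀ x y, 0 ≤ P x y) (f : X → ℝ) (x : X) :
    ∑ y, P x y * (f x - f y) ^ 2 ≤ lipC P f ^ 2 := by
  have h0 : 0 ≤ ∑ y, P x y * |f x - f y| ^ 2 :=
    Finset.sum_nonneg fun y _ => mul_nonneg (hP0 x y) (sq_nonneg _)
  have h1 : Real.sqrt (∑ y, P x y * |f x - f y| ^ 2) ≤ lipC P f :=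
    le_ciSup (f := fun x => Real.sqrt (∑ y, P x y * |f x - f y| ^ 2))
      (Set.finite_range _).bddAbove x
  have h2 := pow_le_pow_left₀ (Real.sqrt_nonneg _) h1 2
  rw [Real.sq_sqrt h0] at h2
  simpa only [sq_abs] using h2

/-- Energy bound for `exp (s f / 2)`: reversibility lets the exponential weight be placed at the
starting point of each step, where the mean squared increment is at most `lipC P f ^ 2`. -/
theorem dirForm_exp_le {X : Type*} [Fintype X] [Nonempty X]
    (μ : X → ℝ) (hμpos : ∀ x, 0 < μ x) (P : X → X → ℝ) (hP0 : ∀ x y, 0 ≤ P x y)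
    (hrev : ∀ x y, μ x * P x y = μ y * P y x) (f : X → ℝ) (s : ℝ) :
    dirForm μ P (fun x => Real.exp (s / 2 * f x)) (fun x => Real.exp (s / 2 * f x)) ≤
      (s * lipC P f / 2) ^ 2 * ∑ x, μ x * Real.exp (s * f x) := by
  have hpt : ∀ x y, (Real.exp (s / 2 * f x) - Real.exp (s / 2 * f y)) *
      (Real.exp (s / 2 * f x) - Real.exp (s / 2 * f y)) * (μ x * P x y) ≤
      s ^ 2 / 4 * (f x - f y) ^ 2 * Real.exp (s * f x) * (μ x * P x y) +
      s ^ 2 / 4 * (f x - f y) ^ 2 * Real.exp (s * f y) * (μ x * P x y) := by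
    intro x y
    have h := exp_sub_sq_le (s / 2 * f x) (s / 2 * f y)
    rw [show 2 * (s / 2 * f x) = s * f x by ring, show 2 * (s / 2 * f y) = s * f y by ring] at h
    have := mul_le_mul_of_nonneg_right h (mul_nonneg (hμpos x).le (hP0 x y))
    nlinarith [this]
  -- Reversibility makes the two halves of the symmetrised bound equal.
  have hsymm : ∑ x, ∑ y, s ^ 2 / 4 * (f x - f y) ^ 2 * Real.exp (s * f y) * (μ x * P x y) =
      ∑ x, ∑ y, s ^ 2 / 4 * (f x - f y) ^ 2 * Real.exp (s * f x) * (μ x * P x y) := by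
    rw [Finset.sum_comm]
    refine Finset.sum_congr rfl fun x _ => Finset.sum_congr rfl fun y _ => ?_
    rw [hrev y x]
    ring
  have hsum := Finset.sum_le_sum fun x (_ : x ∈ Finset.univ) =>
    Finset.sum_le_sum fun y (_ : y ∈ Finset.univ) => hpt x y
  simp only [Finset.sum_add_distrib] at hsum
  rw [hsymm] at hsum
  have hmain : ∑ x, ∑ y, s ^ 2 / 4 * (f x - f y) ^ 2 * Real.exp (s * f x) * (μ x * P x y) ≤
      (s * lipC P f / 2) ^ 2 * ∑ x, μ x * Real.exp (s * f x) := by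
    rw [Finset.mul_sum]
    refine Finset.sum_le_sum fun x _ => ?_
    have hw : 0 ≤ s ^ 2 / 4 * (μ x * Real.exp (s * f x)) :=
      mul_nonneg (by positivity) (mul_nonneg (hμpos x).le (Real.exp_pos _).le)
    calc ∑ y, s ^ 2 / 4 * (f x - f y) ^ 2 * Real.exp (s * f x) * (μ x * P x y)
        = s ^ 2 / 4 * (μ x * Real.exp (s * f x)) * ∑ y, P x y * (f x - f y) ^ 2 := by
          rw [Finset.mul_sum]
          exact Finset.sum_congr rfl fun y _ => by ring
      _ ≤ s ^ 2 / 4 * (μ x * Real.exp (s * f x)) * lipC P f ^ 2 :=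
          mul_le_mul_of_nonneg_left (sum_sq_le_lipC_sq P hP0 f x) hw
      _ = _ := by ring
  unfold dirForm
  linarith

theorem varVal_eq {X : Type*} [Fintype X] (μ : X → ℝ) (hμ1 : ∑ x, μ x = 1) (g : X → ℝ) :
    varVal μ g = ∑ x, μ x * g x ^ 2 - (∑ x, μ x * g x) ^ 2 := by
  unfold varVal
  have h : ∀ x, μ x * (g x - eVal μ g) ^ 2 =
      μ x * g x ^ 2 - 2 * eVal μ g * (μ x * g x) + eVal μ g ^ 2 * μ x := fun x => by ring
  simp only [h, Finset.sum_add_distrib, Finset.sum_sub_distrib, ← Finset.mul_sum, hμ1]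
  unfold eVal
  ring

/-- The Aida–Stroock recursion: Poincaré inequality for `exp (s f / 2)`, whose square is
`exp (s f)`. -/
theorem mgf_halving {X : Type*} [Fintype X] [Nonempty X]
    (μ : X → ℝ) (hμpos : ∀ x, 0 < μ x) (hμ1 : ∑ x, μ x = 1)
    (P : X → X → ℝ) (hP0 : ∀ x y, 0 ≤ P x y)
    (hrev : ∀ x y, μ x * P x y = μ y * P y x) (f : X → ℝ) (hgap : 0 < specGap μ P) (s : ℝ) :
    (∑ x, μ x * Real.exp (s * f x)) * (1 - (s * lipC P f / (2 * Real.sqrt (specGap μ P))) ^ 2) ≤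
      (∑ x, μ x * Real.exp (s / 2 * f x)) ^ 2 := by
  have h := (poincare μ hμpos P hP0 (fun x => Real.exp (s / 2 * f x))).trans
    (dirForm_exp_le μ hμpos P hP0 hrev f s)
  have e : ∀ x, Real.exp (s / 2 * f x) ^ 2 = Real.exp (s * f x) := fun x => by
    rw [← Real.exp_nat_mul]
    congr 1
    push_cast
    ring
  rw [varVal_eq μ hμ1] at h
  simp only [e] at h
  have h2 : (s * lipC P f / (2 * Real.sqrt (specGap μ P))) ^ 2 =
      (s * lipC P f / 2) ^ 2 / specGap μ P := by
    rw [div_pow, mul_pow 2, Real.sq_sqrt hgap.le]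
    field_simp
  rw [h2]
  rw [← le_div_iff₀' hgap] at h
  have h3 : (s * lipC P f / 2) ^ 2 * (∑ x, μ x * Real.exp (s * f x)) / specGap μ P =
    (∑ x, μ x * Real.exp (s * f x)) * ((s * lipC P f / 2) ^ 2 / specGap μ P) := by ring
  rw [mul_sub, ← h3]
  linarith

theorem theta_term_nonneg (t : ℝ) (ht0 : 0 ≤ t) (ht1 : t < 1) (n : ℕ) :
    0 ≤ (2 : ℝ) ^ n * Real.log (1 / (1 - t / 4 ^ n)) := by
  have h4 : (1 : ℝ) ≤ 4 ^ n := one_le_pow₀ (by norm_num)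
  have h1 : t / 4 ^ n ≤ t := div_le_self ht0 h4
  have h2 : 0 ≤ t / 4 ^ n := by positivity
  refine mul_nonneg (by positivity) (Real.log_nonneg ?_)
  rw [le_div_iff₀ (by linarith)]
  linarith

theorem theta_summable (t : ℝ) (ht0 : 0 ≤ t) (ht1 : t < 1) :
    Summable fun n : ℕ => (2 : ℝ) ^ n * Real.log (1 / (1 - t / 4 ^ n)) := by
  have hg : Summable fun n : ℕ => (t / (1 - t)) * (1 / 2 : ℝ) ^ n :=
    summable_geometric_two.mul_left _
  refine Summable.of_nonneg_of_le (theta_term_nonneg t ht0 ht1) (fun n => ?_) hg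
  have h4 : (1 : ℝ) ≤ 4 ^ n := one_le_pow₀ (by norm_num)
  have h1 : t / 4 ^ n ≤ t := div_le_self ht0 h4
  have h2 : 0 ≤ t / 4 ^ n := by positivity
  have hp : 0 < 1 - t / 4 ^ n := by linarith
  have hl := Real.log_le_sub_one_of_pos (show 0 < 1 / (1 - t / 4 ^ n) by positivity)
  have h5 : 1 / (1 - t / 4 ^ n) - 1 = (t / 4 ^ n) / (1 - t / 4 ^ n) := by
    rw [div_sub_one hp.ne']
    congr 1
    ring
  have h6 : (t / 4 ^ n) / (1 - t / 4 ^ n) ≤ (t / 4 ^ n) / (1 - t) :=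
    div_le_div_of_nonneg_left h2 (by linarith) (by linarith)
  have h7 : (2 : ℝ) ^ n * ((t / 4 ^ n) / (1 - t)) = t / (1 - t) * (1 / 2) ^ n := by
    rw [show (4 : ℝ) = 2 * 2 by norm_num, mul_pow, div_pow, one_pow]
    have : (1 - t) ≠ 0 := by linarith
    field_simp
  rw [← h7]
  exact mul_le_mul_of_nonneg_left (by linarith) (by positivity)

/-- The moment generating function has derivative `E_μ[f]` at `0`, evaluated along the dyadic
sequence used in the iteration. -/
theorem mgf_rescaled_tendsto {X : Type*} [Fintype X] (μ : X → ℝ) (hμ1 : ∑ x, μ x = 1)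
    (f : X → ℝ) (lam : ℝ) :
    Filter.Tendsto (fun n : ℕ => (2 : ℝ) ^ n * (∑ x, μ x * Real.exp (lam / 2 ^ n * f x) - 1))
      Filter.atTop (nhds (lam * eVal μ f)) := by
  have hd : HasDerivAt (fun r : ℝ => ∑ x, μ x * Real.exp (r * (lam * f x)))
      (lam * eVal μ f) 0 := by
    have h : ∀ x ∈ Finset.univ, HasDerivAt (fun r : ℝ => μ x * Real.exp (r * (lam * f x)))
        (μ x * (lam * f x)) 0 := fun x _ => by
      have h1 := (((hasDerivAt_id (0 : ℝ)).mul_const (lam * f x)).exp).const_mul (μ x)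
      simpa using h1
    have h2 := HasDerivAt.fun_sum h
    have h3 : ∑ x, μ x * (lam * f x) = lam * eVal μ f := by
      unfold eVal
      rw [Finset.mul_sum]
      exact Finset.sum_congr rfl fun x _ => by ring
    rwa [h3] at h2
  have hseq : Filter.Tendsto (fun n : ℕ => (1 / 2 : ℝ) ^ n) Filter.atTop
      (nhdsWithin 0 {0}ᶜ) := by
    refine tendsto_nhdsWithin_iff.2 ⟨tendsto_pow_atTop_nhds_zero_of_lt_one (by norm_num)
      (by norm_num), Filter.Eventually.of_forall fun n => ?_⟩
    simp
  have h := hd.tendsto_slope_zero.comp hseq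
  refine h.congr fun n => ?_
  simp only [Function.comp, smul_eq_mul, zero_add, zero_mul, Real.exp_zero, mul_one, hμ1]
  congr 1
  · simp
  · congr 1
    refine Finset.sum_congr rfl fun x _ => ?_
    congr 2
    rw [div_pow, one_pow]
    ring

/-- **Aida–Stroock bound** (Theorem 1): for `0 ≤ λ < 2√Λ / Φ(f)`,
`ln E_μ[e^{λ f}] ≤ λ E_μ[f] + Θ(λ Φ(f) / (2√Λ))`. -/
theorem aida_stroock_mgf_bound
    {X : Type*} [Fintype X] [Nonempty X] (hX : 1 < Fintype.card X)
    (μ : X → ℝ) (hμpos : ∀ x, 0 < μ x) (hμ1 : ∑ x, μ x = 1)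
    (P : X → X → ℝ) (hP0 : ∀ x y, 0 ≤ P x y) (hP1 : ∀ x, ∑ y, P x y = 1)
    (hrev : ∀ x y, μ x * P x y = μ y * P y x)
    (f : X → ℝ) (lam : ℝ) (hlam0 : 0 ≤ lam)
    (hlam : lam < 2 * Real.sqrt (specGap μ P) / lipC P f) :
    Real.log (∑ x, μ x * Real.exp (lam * f x)) ≤
      lam * eVal μ f + ThetaF (lam * lipC P f / (2 * Real.sqrt (specGap μ P))) := by
  have hlip0 : 0 ≤ lipC P f := Real.iSup_nonneg fun x => Real.sqrt_nonneg _
  -- In the degenerate cases the quotient bounding `lam` is `0`, contradicting `0 ≤ lam`.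
  have hlip : 0 < lipC P f := by
    refine hlip0.lt_of_ne fun h => ?_
    rw [← h, div_zero] at hlam
    linarith
  have hsq : 0 < Real.sqrt (specGap μ P) := by
    refine (Real.sqrt_nonneg _).lt_of_ne fun h => ?_
    rw [← h, mul_zero, zero_div] at hlam
    linarith
  have hgap : 0 < specGap μ P := Real.sqrt_pos.1 hsq
  have ht0 : 0 ≤ lam * lipC P f / (2 * Real.sqrt (specGap μ P)) := by positivity
  have ht1 : lam * lipC P f / (2 * Real.sqrt (specGap μ P)) < 1 := by
    rw [div_lt_one (by positivity)]
    exact (lt_div_iff₀ hlip).1 hlam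
  set t := lam * lipC P f / (2 * Real.sqrt (specGap μ P)) with ht
  have hM : ∀ s, 0 < ∑ x, μ x * Real.exp (s * f x) := fun s =>
    Finset.sum_pos (fun x _ => mul_pos (hμpos x) (Real.exp_pos _)) Finset.univ_nonempty
  have hstep : ∀ n : ℕ, Real.log (∑ x, μ x * Real.exp (lam / 2 ^ n * f x)) ≤
      Real.log (1 / (1 - t / 4 ^ n)) +
        2 * Real.log (∑ x, μ x * Real.exp (lam / 2 ^ (n + 1) * f x)) := by
    intro n
    have h := mgf_halving μ hμpos hμ1 P hP0 hrev f hgap (lam / 2 ^ n)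
    have e1 : lam / 2 ^ n * lipC P f / (2 * Real.sqrt (specGap μ P)) = t / 2 ^ n := by
      rw [ht]
      ring
    have e2 : lam / 2 ^ n / 2 = lam / 2 ^ (n + 1) := by
      rw [pow_succ, div_div]
    have e3 : (t / 2 ^ n) ^ 2 = t ^ 2 / 4 ^ n := by
      rw [div_pow, ← pow_mul, mul_comm n 2, pow_mul]
      norm_num
    rw [e1, e2, e3] at h
    have h4 : (1 : ℝ) ≤ 4 ^ n := one_le_pow₀ (by norm_num)
    have h1 : t / 4 ^ n ≤ t := div_le_self ht0 h4
    have h5 : t ^ 2 / 4 ^ n ≤ t / 4 ^ n := by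
      gcongr
      nlinarith
    have hp : 0 < 1 - t / 4 ^ n := by linarith
    have h6 : (∑ x, μ x * Real.exp (lam / 2 ^ n * f x)) * (1 - t / 4 ^ n) ≤
        (∑ x, μ x * Real.exp (lam / 2 ^ (n + 1) * f x)) ^ 2 :=
      (mul_le_mul_of_nonneg_left (by linarith) (hM _).le).trans h
    have h7 := Real.log_le_log (mul_pos (hM _) hp) h6
    rw [Real.log_mul (hM _).ne' hp.ne', Real.log_pow] at h7
    rw [one_div, Real.log_inv]
    push_cast at h7
    linarith
  have hiter : ∀ n : ℕ, Real.log (∑ x, μ x * Real.exp (lam * f x)) ≤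
      ∑ k ∈ Finset.range n, (2 : ℝ) ^ k * Real.log (1 / (1 - t / 4 ^ k)) +
        2 ^ n * Real.log (∑ x, μ x * Real.exp (lam / 2 ^ n * f x)) := by
    intro n
    induction n with
    | zero => simp
    | succ n ih =>
      rw [Finset.sum_range_succ]
      have h := mul_le_mul_of_nonneg_left (hstep n) (show (0 : ℝ) ≤ 2 ^ n by positivity)
      rw [mul_add, ← mul_assoc, ← pow_succ] at h
      linarith
  have hlim := (mgf_rescaled_tendsto μ hμ1 f lam).add_const (ThetaF t)
  refine ge_of_tendsto' hlim fun n => (hiter n).trans ?_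
  have h1 : ∑ k ∈ Finset.range n, (2 : ℝ) ^ k * Real.log (1 / (1 - t / 4 ^ k)) ≤ ThetaF t :=
    (theta_summable t ht0 ht1).sum_le_tsum _ fun k _ => theta_term_nonneg t ht0 ht1 k
  have h2 := mul_le_mul_of_nonneg_left (Real.log_le_sub_one_of_pos (hM (lam / 2 ^ n)))
    (show (0 : ℝ) ≤ 2 ^ n by positivity)
  linarith
end

section
/- The constant κ = Σ_{n=1}^∞ 2^n ln(1/(1 − 4^{−n})) equals Σ_{m=1}^∞ 2/(m(4^m − 2)). -/
/-- The asymmetric `L^∞`-`L^2` Lipschitz constant of `f` (only decreasing moves count). -/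
noncomputable def lipAsymC {X : Type*} [Fintype X] [Nonempty X] (P : X → X → ℝ)
    (f : X → ℝ) : ℝ :=
  ⨆ x, Real.sqrt (∑ y, P x y * |f x - f y| ^ 2 * (if 0 < f x - f y then 1 else 0))

/-- Positive fluctuation `ℱ⁺_μ(f;a) = μ({x : f(x) - E_μ[f] ≥ a})`. -/
noncomputable def fPlus {X : Type*} [Fintype X] (μ f : X → ℝ) (a : ℝ) : ℝ :=
  ∑ x, if a ≤ f x - eVal μ f then μ x else 0

/-- Negative fluctuation `ℱ⁻_μ(f;a) = ℱ⁺_μ(-f;a) = μ({x : f(x) - E_μ[f] ≤ -a})`. -/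
noncomputable def fMinus {X : Type*} [Fintype X] (μ f : X → ℝ) (a : ℝ) : ℝ :=
  ∑ x, if f x - eVal μ f ≤ -a then μ x else 0

/-- The constant `κ = ∑_{n=1}^∞ 2^n ln(1/(1 - 4^{-n}))`. -/
noncomputable def kapC : ℝ :=
  ∑' n : ℕ, (2 : ℝ) ^ (n + 1) * Real.log (1 / (1 - 1 / 4 ^ (n + 1)))

/-- `φ(x) = √(1 + 1/x²) - 1/x`. -/
noncomputable def phiF (x : ℝ) : ℝ := Real.sqrt (1 + 1 / x ^ 2) - 1 / x

/-- `ϑ(x) = x φ(x) + ln((2/x) φ(x))` for `x > 0`, with `ϑ(0) = 0`. -/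
noncomputable def varthetaF (x : ℝ) : ℝ :=
  if x = 0 then 0 else x * phiF x + Real.log (2 / x * phiF x)

/-- The `(n, m)` term of the double series for `κ`; both indices are shifted by one. -/
noncomputable def kapTerm (n m : ℕ) : ℝ :=
  (2 : ℝ) ^ (n + 1) * ((1 / 4 ^ (n + 1)) ^ (m + 1) / (m + 1))

theorem hasSum_kapTerm_right (n : ℕ) :
    HasSum (kapTerm n) ((2 : ℝ) ^ (n + 1) * Real.log (1 / (1 - 1 / 4 ^ (n + 1)))) := by
  have hx : |(1 : ℝ) / 4 ^ (n + 1)| < 1 := by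
    rw [abs_of_pos (by positivity), div_lt_one (by positivity)]
    exact one_lt_pow₀ (by norm_num) (by omega)
  rw [one_div (1 - _ : ℝ), Real.log_inv]
  exact (Real.hasSum_pow_div_log_of_abs_lt_one hx).mul_left _

theorem kapTerm_eq (n m : ℕ) :
    kapTerm n m = (2 / 4 ^ (m + 1) : ℝ) ^ n * (2 / 4 ^ (m + 1) / (m + 1)) := by
  have h : ((4 : ℝ) ^ (n + 1)) ^ (m + 1) = (4 ^ (m + 1)) ^ n * 4 ^ (m + 1) := by
    rw [← pow_succ, ← pow_mul, ← pow_mul, mul_comm]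
  rw [kapTerm, div_pow, one_pow, h, div_pow, pow_succ (2 : ℝ) n]
  field_simp

theorem hasSum_kapTerm_left (m : ℕ) :
    HasSum (fun n => kapTerm n m) ((2 : ℝ) / ((m + 1) * (4 ^ (m + 1) - 2))) := by
  have h4 : (4 : ℝ) ≤ 4 ^ (m + 1) := le_self_pow₀ (by norm_num) (by omega)
  have hr : (2 : ℝ) / 4 ^ (m + 1) < 1 := by
    rw [div_lt_one (by positivity)]; linarith
  have hs := (hasSum_geometric_of_lt_one (by positivity) hr).mul_right
    ((2 : ℝ) / 4 ^ (m + 1) / (m + 1))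
  simp only [kapTerm_eq]
  have h2 : (4 : ℝ) ^ (m + 1) - 2 ≠ 0 := by linarith
  have h6 : 1 - (2 : ℝ) / 4 ^ (m + 1) = (4 ^ (m + 1) - 2) / 4 ^ (m + 1) := by
    field_simp
  have key : (2 : ℝ) / ((m + 1) * (4 ^ (m + 1) - 2)) =
      (1 - 2 / 4 ^ (m + 1))⁻¹ * (2 / 4 ^ (m + 1) / (m + 1)) := by
    rw [h6]
    field_simp
  rw [key]
  exact hs

/-- Pulling one factor out of the geometric series in `n` leaves the bound
`kapTerm n m ≤ (1 / 2) ^ n * (1 / 4) ^ m`. -/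
theorem summable_kapTerm : Summable (Function.uncurry kapTerm) := by
  have hg : Summable fun p : ℕ × ℕ => (1 / 2 : ℝ) ^ p.1 * (1 / 4 : ℝ) ^ p.2 :=
    Summable.mul_of_nonneg (summable_geometric_of_lt_one (by norm_num) (by norm_num))
      (summable_geometric_of_lt_one (by norm_num) (by norm_num))
      (fun _ => by positivity) (fun _ => by positivity)
  refine Summable.of_nonneg_of_le ?_ ?_ hg
  · rintro ⟨n, m⟩
    simp only [Function.uncurry, kapTerm]
    positivity
  · rintro ⟨n, m⟩
    simp only [Function.uncurry, kapTerm_eq]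
    have e : (2 : ℝ) / 4 ^ (m + 1) = 1 / 2 * (1 / 4) ^ m := by
      rw [pow_succ, one_div_pow]; field_simp; norm_num
    have hq : (1 / 4 : ℝ) ^ m ≤ 1 := pow_le_one₀ (by norm_num) (by norm_num)
    have hq0 : (0 : ℝ) ≤ (1 / 4 : ℝ) ^ m := by positivity
    rw [e]
    apply mul_le_mul
    · exact pow_le_pow_left₀ (by positivity) (by linarith) n
    · rw [div_le_iff₀ (by positivity)]
      have : (0 : ℝ) ≤ (1 / 4 : ℝ) ^ m * m := by positivity
      linarith
    · positivity
    · positivity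

/-- `κ = ∑_{n=1}^∞ 2^n ln(1/(1-4^{-n})) = ∑_{m=1}^∞ 2/(m(4^m - 2))`. -/
theorem kappa_eq_sum :
    kapC = ∑' m : ℕ, (2 : ℝ) / ((m + 1) * (4 ^ (m + 1) - 2)) := by
  simp only [kapC, ← (hasSum_kapTerm_right _).tsum_eq, ← (hasSum_kapTerm_left _).tsum_eq]
  exact summable_kapTerm.tsum_comm.symm
end

section
/- Let 𝒳 be a finite set, μ a probability measure on 𝒳, P a Markov transition matrix on 𝒳, and let X₀, X₁, X₂, … be a Markov chain with transition matrix P and initial distribution μ, i.e. ℙ(X₀=x₀, …, X_t=x_t) = μ(x₀)P(x₀,x₁)⋯P(x_{t−1},x_t). Then for every f : 𝒳 → ℝ and every t ∈ ℕ, ( E[ (f(X₀) − f(X_t))² · 1{f(X₀) > f(X_t)} ] )^{1/2} ≤ t · Φ̃(f), where Φ̃ is the asymmetric Lipschitz constant. -/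
/-- The probability `μ(x₀) P(x₀,x₁) ⋯ P(x_{t-1},x_t)` of the path `x`. -/
noncomputable def pathWeight {X : Type*} (μ : X → ℝ) (P : X → X → ℝ) (t : ℕ)
    (x : Fin (t + 1) → X) : ℝ :=
  μ (x 0) * ∏ s : Fin t, P (x s.castSucc) (x s.succ)

lemma sq_mul_ite_eq (r : ℝ) : r ^ 2 * (if 0 < r then 1 else 0) = (max r 0) ^ 2 := by
  split_ifs with h
  · rw [max_eq_left h.le, mul_one]
  · rw [max_eq_right (not_lt.mp h)]; simp

/-- For `t = 0` the coefficient `(t + 1) / t` is `0`, which is harmless because then `a = 0`. -/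
lemma sq_max_add_le (t : ℕ) (a b : ℝ) (h : t = 0 → a = 0) :
    (max (a + b) 0) ^ 2 ≤ ((t : ℝ) + 1) / t * (max a 0) ^ 2 + (t + 1) * (max b 0) ^ 2 := by
  rcases Nat.eq_zero_or_pos t with rfl | ht
  · simp [h rfl]
  · have ht' : (0 : ℝ) < t := by exact_mod_cast ht
    have hA := le_max_right a 0
    have hB := le_max_right b 0
    have hle : max (a + b) 0 ≤ max a 0 + max b 0 :=
      max_le (add_le_add (le_max_left _ _) (le_max_left _ _)) (add_nonneg hA hB)
    have hsq := pow_le_pow_left₀ (le_max_right (a + b) 0) hle 2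
    refine hsq.trans ?_
    have key : ((t : ℝ) + 1) / t * (max a 0) ^ 2 + (t + 1) * (max b 0) ^ 2
        - (max a 0 + max b 0) ^ 2 = (max a 0 - t * max b 0) ^ 2 / t := by
      field_simp
      ring
    have : 0 ≤ (max a 0 - t * max b 0) ^ 2 / t := by positivity
    linarith

/-- Conditioning on the first `t` steps. -/
lemma sum_pathWeight_succ {X : Type*} [Fintype X] (μ : X → ℝ) (P : X → X → ℝ) (t : ℕ)
    (G : X → X → ℝ) :
    ∑ x : Fin (t + 1 + 1) → X, pathWeight μ P (t + 1) x * G (x 0) (x (Fin.last (t + 1))) =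
      ∑ x : Fin (t + 1) → X, pathWeight μ P t x *
        ∑ y, P (x (Fin.last t)) y * G (x 0) y := by
  rw [← (Fin.snocEquiv (fun _ : Fin (t + 1 + 1) => X)).sum_comp, Fintype.sum_prod_type_right]
  refine Finset.sum_congr rfl fun x _ => ?_
  rw [Finset.mul_sum]
  refine Finset.sum_congr rfl fun y _ => ?_
  have h0 : (Fin.snoc x y : Fin (t + 1 + 1) → X) 0 = x 0 :=
    Fin.snoc_castSucc (α := fun _ => X) y x 0
  have hs (s : Fin t) : (Fin.snoc x y : Fin (t + 1 + 1) → X) s.castSucc.succ = x s.succ := by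
    rw [Fin.succ_castSucc]
    exact Fin.snoc_castSucc (α := fun _ => X) y x s.succ
  simp only [pathWeight, Fin.snocEquiv_apply, Fin.prod_univ_castSucc, h0, hs, Fin.snoc_castSucc,
    Fin.succ_last, Fin.snoc_last]
  ring

lemma pathWeight_nonneg {X : Type*} {μ : X → ℝ} (hμ0 : ∀ x, 0 ≤ μ x) {P : X → X → ℝ}
    (hP0 : ∀ x y, 0 ≤ P x y) (t : ℕ) (x : Fin (t + 1) → X) : 0 ≤ pathWeight μ P t x :=
  mul_nonneg (hμ0 _) (Finset.prod_nonneg fun _ _ => hP0 _ _)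

lemma sum_pathWeight {X : Type*} [Fintype X] {μ : X → ℝ} (hμ1 : ∑ x, μ x = 1)
    {P : X → X → ℝ} (hP1 : ∀ x, ∑ y, P x y = 1) (t : ℕ) :
    ∑ x : Fin (t + 1) → X, pathWeight μ P t x = 1 := by
  induction t with
  | zero =>
    rw [← (Equiv.funUnique (Fin 1) X).symm.sum_comp]
    simpa [pathWeight] using hμ1
  | succ t ih =>
    have := sum_pathWeight_succ μ P t (fun _ _ => 1)
    simpa [hP1, ih] using this

lemma lipAsymC_nonneg {X : Type*} [Fintype X] [Nonempty X] (P : X → X → ℝ) (f : X → ℝ) :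
    0 ≤ lipAsymC P f :=
  Real.iSup_nonneg fun _ => Real.sqrt_nonneg _

lemma step_le_lipAsymC_sq {X : Type*} [Fintype X] [Nonempty X] {P : X → X → ℝ}
    (f : X → ℝ) (x : X) :
    ∑ y, P x y * (max (f x - f y) 0) ^ 2 ≤ lipAsymC P f ^ 2 := by
  have h := le_ciSup (Set.finite_range fun x => Real.sqrt
    (∑ y, P x y * |f x - f y| ^ 2 * (if 0 < f x - f y then 1 else 0))).bddAbove x
  have h' := (Real.sqrt_le_left (lipAsymC_nonneg P f)).mp h
  simpa only [sq_abs, mul_assoc, sq_mul_ite_eq] using h'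

lemma sum_path_le {X : Type*} [Fintype X] [Nonempty X]
    {μ : X → ℝ} (hμ0 : ∀ x, 0 ≤ μ x) (hμ1 : ∑ x, μ x = 1)
    {P : X → X → ℝ} (hP0 : ∀ x y, 0 ≤ P x y) (hP1 : ∀ x, ∑ y, P x y = 1)
    (f : X → ℝ) (t : ℕ) :
    ∑ x : Fin (t + 1) → X, pathWeight μ P t x * (max (f (x 0) - f (x (Fin.last t))) 0) ^ 2 ≤
      (t * lipAsymC P f) ^ 2 := by
  induction t with
  | zero => simp
  | succ t ih =>
    rw [sum_pathWeight_succ μ P t fun x y => (max (f x - f y) 0) ^ 2]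
    have inner (x : Fin (t + 1) → X) :
        ∑ y, P (x (Fin.last t)) y * (max (f (x 0) - f y) 0) ^ 2 ≤
          ((t : ℝ) + 1) / t * (max (f (x 0) - f (x (Fin.last t))) 0) ^ 2 +
            (t + 1) * lipAsymC P f ^ 2 := by
      have hpt (y : X) : P (x (Fin.last t)) y * (max (f (x 0) - f y) 0) ^ 2 ≤
          P (x (Fin.last t)) y *
              (((t : ℝ) + 1) / t * (max (f (x 0) - f (x (Fin.last t))) 0) ^ 2) +
            (t + 1) * (P (x (Fin.last t)) y * (max (f (x (Fin.last t)) - f y) 0) ^ 2) := by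
        have h := sq_max_add_le t (f (x 0) - f (x (Fin.last t))) (f (x (Fin.last t)) - f y)
          (by rintro rfl; simp)
        rw [sub_add_sub_cancel] at h
        have := mul_le_mul_of_nonneg_left h (hP0 (x (Fin.last t)) y)
        linarith
      refine (Finset.sum_le_sum fun y _ => hpt y).trans ?_
      rw [Finset.sum_add_distrib, ← Finset.sum_mul, hP1, one_mul, ← Finset.mul_sum]
      have := step_le_lipAsymC_sq (P := P) f (x (Fin.last t))
      gcongr
    calc _ ≤ ∑ x : Fin (t + 1) → X, pathWeight μ P t x *
          (((t : ℝ) + 1) / t * (max (f (x 0) - f (x (Fin.last t))) 0) ^ 2 +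
            (t + 1) * lipAsymC P f ^ 2) :=
          Finset.sum_le_sum fun x _ =>
            mul_le_mul_of_nonneg_left (inner x) (pathWeight_nonneg hμ0 hP0 t x)
      _ = ((t : ℝ) + 1) / t * (∑ x : Fin (t + 1) → X, pathWeight μ P t x *
            (max (f (x 0) - f (x (Fin.last t))) 0) ^ 2) + (t + 1) * lipAsymC P f ^ 2 := by
          simp only [mul_add, Finset.sum_add_distrib, ← Finset.sum_mul, sum_pathWeight hμ1 hP1,
            one_mul, Finset.mul_sum]
          congr 1
          exact Finset.sum_congr rfl fun x _ => by ring
      _ ≤ ((t : ℝ) + 1) / t * (t * lipAsymC P f) ^ 2 + (t + 1) * lipAsymC P f ^ 2 := by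
          gcongr
      _ = (((t + 1 : ℕ) : ℝ) * lipAsymC P f) ^ 2 := by
          rcases Nat.eq_zero_or_pos t with rfl | ht
          · simp
          · have ht' : (t : ℝ) ≠ 0 := by exact_mod_cast ht.ne'
            push_cast
            field_simp

/-- **Proposition (Lipschitz property along the chain)**: if `X₀, X₁, …` is a Markov chain
with transition matrix `P` started from `μ`, then
`(E[(f(X₀)-f(X_t))² · 1{f(X₀) > f(X_t)}])^{1/2} ≤ t · Φ̃(f)`.
The expectation is written as an explicit sum over paths `x : Fin (t+1) → X`
weighted by `μ(x₀) P(x₀,x₁) ⋯ P(x_{t-1},x_t)`. -/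
theorem lipAsym_along_chain
    {X : Type*} [Fintype X] [Nonempty X]
    (μ : X → ℝ) (hμ0 : ∀ x, 0 ≤ μ x) (hμ1 : ∑ x, μ x = 1)
    (P : X → X → ℝ) (hP0 : ∀ x y, 0 ≤ P x y) (hP1 : ∀ x, ∑ y, P x y = 1)
    (f : X → ℝ) (t : ℕ) :
    Real.sqrt (∑ x : Fin (t + 1) → X,
        (μ (x 0) * ∏ s : Fin t, P (x s.castSucc) (x s.succ)) *
          ((f (x 0) - f (x (Fin.last t))) ^ 2 *
            (if 0 < f (x 0) - f (x (Fin.last t)) then 1 else 0))) ≤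
      t * lipAsymC P f := by
  refine Real.sqrt_le_iff.mpr ⟨mul_nonneg t.cast_nonneg (lipAsymC_nonneg P f), ?_⟩
  simp only [sq_mul_ite_eq]
  exact sum_path_le hμ0 hμ1 hP0 hP1 f t
end

section
/- Let f_n : A_m^n → ℝ be the length of the longest (strictly) increasing subsequence, f_n(x₁,…,x_n) = max{ |J| : J ⊆ {1,…,n} and for all i,j ∈ J, i < j implies x_i < x_j }, and for K ∈ ℕ let f_n^{(K)} = min(K, f_n) be its truncation at level K. Then for the single-coordinate uniform-replacement chain P_{m,n} on A_m^n, the asymmetric Lipschitz constant satisfies Φ̃(f_n^{(K)}) ≤ (K/n)^{1/2}. -/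
open scoped Classical in
/-- Length of the longest (strictly) increasing subsequence of `(x₁,…,x_n)`, with values in
`A_m = {0, 1/m, …, 1}` modelled by `Fin (m+1)` (an order-isomorphic copy of `A_m`):
the largest cardinality of a subset `J ⊆ {1,…,n}` on which `x` is strictly increasing. -/
noncomputable def lisLen {m n : ℕ} (x : Fin n → Fin (m + 1)) : ℕ :=
  Finset.sup
    (Finset.univ.filter fun J : Finset (Fin n) =>
      ∀ i ∈ J, ∀ j ∈ J, i < j → x i < x j)
    Finset.card

/-- The single-coordinate uniform-replacement Markov chain on `A_m^n`. -/
noncomputable def replChain (m n : ℕ) (x y : Fin n → Fin (m + 1)) : ℝ :=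
  (1 / ((n : ℝ) * (m + 1))) * ∑ i : Fin n,
    ∏ j ∈ Finset.univ.erase i, (if x j = y j then (1 : ℝ) else 0)

lemma card_le_lisLen {m n : ℕ} (x : Fin n → Fin (m + 1)) (J : Finset (Fin n))
    (hJ : ∀ i ∈ J, ∀ j ∈ J, i < j → x i < x j) : J.card ≤ lisLen x := by
  classical
  unfold lisLen
  exact Finset.le_sup (f := Finset.card) (Finset.mem_filter.2 ⟨Finset.mem_univ _, hJ⟩)

lemma exists_card_eq_min_lisLen {m n : ℕ} (x : Fin n → Fin (m + 1)) (K : ℕ) :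
    ∃ J : Finset (Fin n), (∀ i ∈ J, ∀ j ∈ J, i < j → x i < x j) ∧
      J.card = min K (lisLen x) := by
  classical
  obtain ⟨J, hJ, hc⟩ : ∃ J : Finset (Fin n), (∀ i ∈ J, ∀ j ∈ J, i < j → x i < x j) ∧
      lisLen x = J.card := by
    have hne : (Finset.univ.filter fun J : Finset (Fin n) =>
        ∀ i ∈ J, ∀ j ∈ J, i < j → x i < x j).Nonempty := ⟨∅, by simp⟩
    obtain ⟨J, hJ, hc⟩ := Finset.exists_mem_eq_sup _ hne Finset.card
    refine ⟨J, (Finset.mem_filter.1 hJ).2, ?_⟩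
    unfold lisLen
    convert hc
  obtain ⟨I, hI, hIc⟩ := Finset.exists_subset_card_eq (s := J) (n := min K (lisLen x))
    (hc ▸ min_le_right _ _)
  exact ⟨I, fun i hi j hj => hJ i (hI hi) j (hI hj), hIc⟩

/-- Exactly `m + 1` states agree with `x` off the coordinate `i`. -/
lemma sum_prod_erase {m n : ℕ} (x : Fin n → Fin (m + 1)) (i : Fin n) :
    ∑ y : Fin n → Fin (m + 1),
      ∏ j ∈ Finset.univ.erase i, (if x j = y j then (1 : ℝ) else 0) = m + 1 := by
  have h : ∀ y : Fin n → Fin (m + 1),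
      ∏ j ∈ Finset.univ.erase i, (if x j = y j then (1 : ℝ) else 0)
        = ∏ j, (if j = i then 1 else if x j = y j then (1 : ℝ) else 0) := by
    intro y
    rw [← Finset.mul_prod_erase Finset.univ _ (Finset.mem_univ i), if_pos rfl, one_mul]
    exact Finset.prod_congr rfl fun j hj => by rw [if_neg (Finset.ne_of_mem_erase hj)]
  simp_rw [h]
  rw [← Fintype.prod_sum (fun (j : Fin n) (a : Fin (m + 1)) =>
    if j = i then 1 else if x j = a then (1 : ℝ) else 0),
    ← Finset.mul_prod_erase Finset.univ _ (Finset.mem_univ i),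
    Finset.prod_eq_one]
  · simp
  · intro j hj
    simp [Finset.ne_of_mem_erase hj]

/-- The contribution of a move from `x` to `y` that resamples the coordinate `i`: it vanishes for
`i ∉ J`, and the squared decrease is at most `1` for `i ∈ J`. -/
lemma resample_term_le {m n : ℕ} (K : ℕ) (x y : Fin n → Fin (m + 1)) (J : Finset (Fin n))
    (hJ : ∀ i ∈ J, ∀ j ∈ J, i < j → x i < x j) (hc : J.card = min K (lisLen x)) (i : Fin n) :
    (∏ j ∈ Finset.univ.erase i, (if x j = y j then (1 : ℝ) else 0)) *
      (|min (K : ℝ) (lisLen x) - min (K : ℝ) (lisLen y)| ^ 2 *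
        (if 0 < min (K : ℝ) (lisLen x) - min (K : ℝ) (lisLen y) then 1 else 0)) ≤
    if i ∈ J then ∏ j ∈ Finset.univ.erase i, (if x j = y j then (1 : ℝ) else 0) else 0 := by
  by_cases hxy : ∀ j, j ≠ i → x j = y j
  · have h1 : ∏ j ∈ Finset.univ.erase i, (if x j = y j then (1 : ℝ) else 0) = 1 :=
      Finset.prod_eq_one fun j hj => if_pos (hxy j (Finset.ne_of_mem_erase hj))
    have hle : (J.erase i).card ≤ lisLen y := by
      refine card_le_lisLen y _ fun a ha b hb hab => ?_
      rw [← hxy a (Finset.ne_of_mem_erase ha), ← hxy b (Finset.ne_of_mem_erase hb)]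
      exact hJ a (Finset.mem_of_mem_erase ha) b (Finset.mem_of_mem_erase hb) hab
    rw [h1, one_mul, ← Nat.cast_min, ← Nat.cast_min]
    split_ifs with hpos hi hi
    · rw [Finset.card_erase_of_mem hi] at hle
      have h2 : min K (lisLen x) ≤ min K (lisLen y) + 1 := by omega
      have h3 : ((min K (lisLen x) : ℕ) : ℝ) ≤ (min K (lisLen y) : ℕ) + 1 := by exact_mod_cast h2
      rw [abs_of_pos hpos]
      nlinarith
    · rw [Finset.erase_eq_of_notMem hi] at hle
      have h2 : min K (lisLen x) ≤ min K (lisLen y) := by omega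
      have h3 : ((min K (lisLen x) : ℕ) : ℝ) ≤ (min K (lisLen y) : ℕ) := by exact_mod_cast h2
      linarith
    · simp
    · simp
  · push Not at hxy
    obtain ⟨j, hj, hne⟩ := hxy
    rw [Finset.prod_eq_zero (Finset.mem_erase.2 ⟨hj, Finset.mem_univ j⟩) (if_neg hne)]
    simp

/-- The asymmetric Lipschitz constant of the truncated longest-increasing-subsequence
length `f_n^{(K)} = min(K, f_n)` satisfies `Φ̃(f_n^{(K)}) ≤ (K/n)^{1/2}`. -/
theorem lipAsym_truncated_LIS (m n K : ℕ) (hm : 0 < m) (hn : 0 < n) :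
    lipAsymC (replChain m n) (fun x => min (K : ℝ) (lisLen x)) ≤
      Real.sqrt ((K : ℝ) / n) := by
  refine ciSup_le fun x => Real.sqrt_le_sqrt ?_
  obtain ⟨J, hJ, hc⟩ := exists_card_eq_min_lisLen x K
  have hn' : (0 : ℝ) < n := by exact_mod_cast hn
  have hm' : (0 : ℝ) < (m : ℝ) + 1 := by positivity
  have hcK : (J.card : ℝ) ≤ K := by exact_mod_cast hc ▸ min_le_left _ _
  calc _ ≤ ∑ y : Fin n → Fin (m + 1), (1 / ((n : ℝ) * (m + 1))) * ∑ i : Fin n,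
        if i ∈ J then ∏ j ∈ Finset.univ.erase i, (if x j = y j then (1 : ℝ) else 0) else 0 := by
        refine Finset.sum_le_sum fun y _ => ?_
        unfold replChain
        rw [mul_assoc, mul_assoc, Finset.sum_mul]
        exact mul_le_mul_of_nonneg_left
          (Finset.sum_le_sum fun i _ => resample_term_le K x y J hJ hc i) (by positivity)
    _ = (1 / ((n : ℝ) * (m + 1))) * (J.card * (m + 1)) := by
        rw [← Finset.mul_sum, Finset.sum_comm]
        congr 1
        calc _ = ∑ i : Fin n, if i ∈ J then ((m : ℝ) + 1) else 0 :=
              Finset.sum_congr rfl fun i _ => by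
                split_ifs
                · exact sum_prod_erase x i
                · simp
          _ = _ := by simp [mul_add]
    _ = J.card / n := by field_simp
    _ ≤ K / n := by gcongr
end
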